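/- Every finite set of closed normal λ-terms whose elements have pairwise distinct βη-normal forms has a storage operator. -/

import Mathlib

/- Pure untyped λ-calculus with de Bruijn indices. -/

inductive Lam : Type
  | var : ℕ → Lam
  | app : Lam → Lam → Lam
  | abs : Lam → Lam
  deriving DecidableEq

namespace Lam

/-- Renaming of free variables. -/
def rename (ρ : ℕ → ℕ) : Lam → Lam
  | var i => var (ρ i)
  | app u v => app (u.rename ρ) (v.rename ρ)
  | abs u => abs (u.rename (fun i => match i with | 0 => 0 | j+1 => ρ j + 1))

/-- Lifting of a simultaneous substitution under a binder. -/
def liftSub (σ : ℕ → Lam) : ℕ → Lam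
  | 0 => var 0
  | i+1 => (σ i).rename (· + 1)

/-- Simultaneous (capture-avoiding) substitution of the free variables. -/
def subst (σ : ℕ → Lam) : Lam → Lam
  | var i => σ i
  | app u v => app (u.subst σ) (v.subst σ)
  | abs u => abs (u.subst (liftSub σ))

/-- `u.subst0 v` is `u[v/x]` for the first variable. -/
def subst0 (u v : Lam) : Lam :=
  u.subst (fun i => match i with | 0 => v | j+1 => var j)

/-- One step of β-reduction (anywhere in the term). -/
inductive Beta : Lam → Lam → Prop
  | beta (u v : Lam) : Beta (app (abs u) v) (u.subst0 v)
  | appL {u u'} (v) : Beta u u' → Beta (app u v) (app u' v)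
  | appR (u) {v v'} : Beta v v' → Beta (app u v) (app u v')
  | abs {u u'} : Beta u u' → Beta (abs u) (abs u')

/-- β-equivalence `≃β`. -/
def BetaEq : Lam → Lam → Prop := Relation.EqvGen Beta

/-- A term is normal if it has no β-redex. -/
def Normal (t : Lam) : Prop := ∀ u, ¬ Beta t u

def IsAbs : Lam → Prop
  | abs _ => True
  | _ => False

/-- One step of head reduction: reduction of the head redex. -/
inductive HeadStep : Lam → Lam → Prop
  | beta (u v) : HeadStep (app (abs u) v) (u.subst0 v)
  | appL {u u'} (v) : ¬ u.IsAbs → HeadStep u u' → HeadStep (app u v) (app u' v)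
  | abs {u u'} : HeadStep u u' → HeadStep (abs u) (abs u')

/-- `HeadRedN n u v` : `u` head-reduces to `v` in exactly `n` steps (`u ≻ v` with `n(u,v) = n`). -/
inductive HeadRedN : ℕ → Lam → Lam → Prop
  | refl (u) : HeadRedN 0 u u
  | step {n u v w} : HeadStep u v → HeadRedN n v w → HeadRedN (n+1) u w

/-- `u ≻ v` : `v` is obtained from `u` by some head reductions. -/
def HeadRed (u v : Lam) : Prop := ∃ n, HeadRedN n u v

/-- Head normal form. -/
def HeadNF (t : Lam) : Prop := ∀ u, ¬ HeadStep t u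

def ClosedUnder : ℕ → Lam → Prop
  | k, var i => i < k
  | k, app u v => ClosedUnder k u ∧ ClosedUnder k v
  | k, abs u => ClosedUnder (k+1) u

/-- Closed λ-term. -/
def Closed (t : Lam) : Prop := ClosedUnder 0 t

/-- `(f)ⁿx` : `iterApp f n x = (f)(f)…(f)x`. -/
def iterApp (f : Lam) : ℕ → Lam → Lam
  | 0, x => x
  | n+1, x => app f (iterApp f n x)

/-- The Church integer `n̲ = λxλf(f)ⁿx`. -/
def church (n : ℕ) : Lam := abs (abs (iterApp (var 0) n (var 1)))

/-- `(t)w₁…wₖ`. -/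
def appList (t : Lam) (ws : List Lam) : Lam := ws.foldl app t

/-- `T` is a storage operator for the closed normal term `t` :
there is `τ ≃β t` such that for every `θ ≃β t` there is a substitution `σ`
(not touching the fresh variable `f`, represented by the de Bruijn index `0`)
with `(T)θf ≻ (f)σ(τ)`. -/
def IsStorageFor (T t : Lam) : Prop :=
  Closed T ∧ ∃ τ, BetaEq τ t ∧ ∀ θ, BetaEq θ t →
    ∃ σ : ℕ → Lam, σ 0 = var 0 ∧
      HeadRed (app (app T θ) (var 0)) (app (var 0) (τ.subst σ))

end Lam

namespace Lam

/-- One step of η-reduction (anywhere in the term): `λx(t)x → t` when `x ∉ Fv(t)`. -/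
inductive Eta : Lam → Lam → Prop
  | eta (u : Lam) : Eta (abs (app (u.rename (· + 1)) (var 0))) u
  | appL {u u'} (v) : Eta u u' → Eta (app u v) (app u' v)
  | appR (u) {v v'} : Eta v v' → Eta (app u v) (app u v')
  | abs {u u'} : Eta u u' → Eta (abs u) (abs u')

/-- βη-equivalence (two terms are βη-equivalent iff they have the same βη-normal form). -/
def BetaEtaEq : Lam → Lam → Prop := Relation.EqvGen (fun u v => Beta u v ∨ Eta u v)

end Lam

/-!
The normal terms of bounded size are decoded by a single closed term, whatever closed term is to be
returned on each βη-class. The free variables of a term are replaced by permutators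
`λ z₁ … zₚ w. w z₁ … zₚ`, whose arities `p` are more than the maximal number of arguments apart.
Applying `x s₁ … sₘ` under this substitution to a long enough list of closed terms
`a₀ a₁ …` brings `a_{p - m}` into head position, in front of the substituted `s₁, …, sₘ`. The index
`p - m` determines both `x` and `m`, so `a_{p - m}` can be a term that decodes the arguments one
after the other. Abstractions are removed beforehand by applying the term, η-expanded as often as
necessary, to further permutators.

This yields, for closed normal terms `t₁, …, tₙ` with distinct βη-classes, a closed `D` such that
`D tᵢ` is β-equivalent to the `i`-th of `n` selectors, and `T = λ θ f. D θ (f t₁) … (f tₙ)` is a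
storage operator: a term β-equivalent to a selector selects by weak head reduction, because a term
β-equivalent to a variable weak-head reduces to it.
-/

namespace Lam

variable {t u v w u' v' : Lam} {σ σ' : ℕ → Lam} {ρ : ℕ → ℕ} {k ℓ m n : ℕ}

/-! ### Substitution -/

/-- The renaming that acts as `ρ` under one more binder, the analogue of `liftSub` for renamings. -/
def liftRen (ρ : ℕ → ℕ) : ℕ → ℕ
  | 0 => 0
  | j + 1 => ρ j + 1

/-- The environment that sends the first variable to `v` and the others to the values of `σ`. -/
def scons (v : Lam) (σ : ℕ → Lam) : ℕ → Lam
  | 0 => v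
  | j + 1 => σ j

theorem rename_abs (ρ : ℕ → ℕ) (u : Lam) : (abs u).rename ρ = abs (u.rename (liftRen ρ)) := rfl

theorem subst0_eq_subst_scons (u v : Lam) : u.subst0 v = u.subst (scons v var) :=
  congrArg u.subst (funext fun i => by cases i <;> rfl)

theorem rename_eq_subst (t : Lam) (ρ : ℕ → ℕ) : t.rename ρ = t.subst (fun i => var (ρ i)) := by
  induction t generalizing ρ with
  | var i => rfl
  | app u v hu hv => rw [rename, subst, hu, hv]
  | abs u hu =>
    rw [rename_abs, subst, hu]
    congr 2
    funext i
    cases i <;> rfl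

theorem rename_subst (t : Lam) (ρ : ℕ → ℕ) (σ : ℕ → Lam) :
    (t.rename ρ).subst σ = t.subst (σ ∘ ρ) := by
  induction t generalizing ρ σ with
  | var i => rfl
  | app u v hu hv => rw [rename, subst, subst, hu, hv]
  | abs u hu =>
    rw [rename_abs, subst, subst, hu]
    congr 2
    funext i
    cases i <;> rfl

theorem rename_rename (t : Lam) (ρ ρ' : ℕ → ℕ) : (t.rename ρ).rename ρ' = t.rename (ρ' ∘ ρ) := by
  rw [rename_eq_subst _ ρ', rename_subst, rename_eq_subst t]
  rfl

theorem subst_rename (t : Lam) (σ : ℕ → Lam) (ρ : ℕ → ℕ) :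
    (t.subst σ).rename ρ = t.subst (fun i => (σ i).rename ρ) := by
  induction t generalizing σ ρ with
  | var i => rfl
  | app u v hu hv => rw [subst, rename, subst, hu, hv]
  | abs u hu =>
    rw [subst, rename_abs, subst, hu]
    congr 2
    funext i
    cases i with
    | zero => rfl
    | succ i => simp only [liftSub, rename_rename, Function.comp_def, liftRen]

theorem subst_subst (t : Lam) (σ σ' : ℕ → Lam) :
    (t.subst σ).subst σ' = t.subst (fun i => (σ i).subst σ') := by
  induction t generalizing σ σ' with
  | var i => rfl
  | app u v hu hv => rw [subst, subst, subst, hu, hv]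
  | abs u hu =>
    rw [subst, subst, subst, hu]
    congr 2
    funext i
    cases i with
    | zero => rfl
    | succ i => simp only [liftSub, rename_subst, subst_rename, Function.comp_def]

theorem subst_var (t : Lam) : t.subst var = t := by
  induction t with
  | var i => rfl
  | app u v hu hv => rw [subst, hu, hv]
  | abs u hu =>
    have liftSub_var : liftSub var = var := by
      funext i
      cases i <;> rfl
    rw [subst, liftSub_var, hu]

theorem shift_subst_scons (t v : Lam) (σ : ℕ → Lam) :
    (t.rename (· + 1)).subst (scons v σ) = t.subst σ :=
  rename_subst t _ _

theorem subst_liftSub_subst0 (u v : Lam) (σ : ℕ → Lam) :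
    (u.subst (liftSub σ)).subst0 v = u.subst (scons v σ) := by
  rw [subst0_eq_subst_scons, subst_subst]
  congr 1
  funext i
  cases i with
  | zero => rfl
  | succ i => exact (shift_subst_scons _ _ _).trans (subst_var _)

theorem subst0_subst (u v : Lam) (σ : ℕ → Lam) :
    (u.subst0 v).subst σ = (u.subst (liftSub σ)).subst0 (v.subst σ) := by
  rw [subst_liftSub_subst0, subst0_eq_subst_scons, subst_subst]
  congr 1
  funext i
  cases i <;> rfl

theorem subst0_rename (u v : Lam) (ρ : ℕ → ℕ) :
    (u.subst0 v).rename ρ = (u.rename (liftRen ρ)).subst0 (v.rename ρ) := by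
  rw [subst0_eq_subst_scons, subst0_eq_subst_scons, subst_rename, rename_subst]
  congr 1
  funext i
  cases i <;> rfl

theorem ClosedUnder.subst_congr (h : ClosedUnder k t) (hσ : ∀ i < k, σ i = σ' i) :
    t.subst σ = t.subst σ' := by
  induction t generalizing k σ σ' with
  | var i => exact hσ i h
  | app u v hu hv => rw [subst, subst, hu h.1 hσ, hv h.2 hσ]
  | abs u hu =>
    rw [subst, subst, hu h]
    rintro (_ | i) hi
    · rfl
    · rw [liftSub, liftSub, hσ i (by lia)]

theorem Closed.subst (h : Closed t) (σ : ℕ → Lam) : t.subst σ = t :=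
  (ClosedUnder.subst_congr h (by simp)).trans (subst_var t)

theorem Closed.rename (h : Closed t) (ρ : ℕ → ℕ) : t.rename ρ = t := by
  rw [rename_eq_subst, h.subst]

theorem ClosedUnder.mono (h : ClosedUnder k t) (hkn : k ≤ n) : ClosedUnder n t := by
  induction t generalizing k n with
  | var i => exact lt_of_lt_of_le h hkn
  | app u v hu hv => exact ⟨hu h.1 hkn, hv h.2 hkn⟩
  | abs u hu => exact hu (k := k + 1) h (by lia)

theorem Closed.closedUnder (h : Closed t) (k : ℕ) : ClosedUnder k t :=
  ClosedUnder.mono h (Nat.zero_le k)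

theorem ClosedUnder.rename (h : ClosedUnder k t) (hρ : ∀ i < k, ρ i < n) :
    ClosedUnder n (t.rename ρ) := by
  induction t generalizing k n ρ with
  | var i => exact hρ i h
  | app u v hu hv => exact ⟨hu h.1 hρ, hv h.2 hρ⟩
  | abs u hu =>
    rw [rename_abs]
    refine hu (k := k + 1) (n := n + 1) h ?_
    rintro (_ | i) hi
    · exact Nat.succ_pos n
    · exact Nat.succ_lt_succ (hρ i (by lia))

theorem appList_append (u : Lam) (vs ws : List Lam) :
    appList u (vs ++ ws) = appList (appList u vs) ws :=
  List.foldl_append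

theorem appList_subst (u : Lam) (vs : List Lam) (σ : ℕ → Lam) :
    (appList u vs).subst σ = appList (u.subst σ) (vs.map (subst σ)) := by
  induction vs generalizing u with
  | nil => rfl
  | cons v _ ih => exact ih (app u v)

theorem appList_rename (u : Lam) (vs : List Lam) (ρ : ℕ → ℕ) :
    (appList u vs).rename ρ = appList (u.rename ρ) (vs.map (rename ρ)) := by
  induction vs generalizing u with
  | nil => rfl
  | cons v _ ih => exact ih (app u v)

theorem ClosedUnder.appList {vs : List Lam} (hu : ClosedUnder k u)
    (hvs : ∀ v ∈ vs, ClosedUnder k v) : ClosedUnder k (appList u vs) := by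
  induction vs generalizing u with
  | nil => exact hu
  | cons v vs ih =>
    rw [List.forall_mem_cons] at hvs
    exact ih ⟨hu, hvs.1⟩ hvs.2

/-! ### Weak head reduction to a variable -/

/-- Parallel β-reduction: contracts any set of redexes that are already present. -/
inductive Par : Lam → Lam → Prop
  | var (i : ℕ) : Par (var i) (var i)
  | app {u u' v v' : Lam} : Par u u' → Par v v' → Par (app u v) (app u' v')
  | abs {u u' : Lam} : Par u u' → Par (abs u) (abs u')
  | beta {u u' v v' : Lam} : Par u u' → Par v v' → Par (app (abs u) v) (u'.subst0 v')

/-- One step of weak head reduction: a head reduction step that is not under an abstraction. -/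
inductive WeakHead : Lam → Lam → Prop
  | beta (u v : Lam) : WeakHead (app (abs u) v) (u.subst0 v)
  | appL {u u' : Lam} (v : Lam) : WeakHead u u' → WeakHead (app u v) (app u' v)

/-- Weak head reduction in any number of steps. -/
abbrev WeakHeads : Lam → Lam → Prop := Relation.ReflTransGen WeakHead

/-- Internal parallel reduction: parallel reduction that does not contract the weak head redex. -/
inductive IntPar : Lam → Lam → Prop
  | var (i : ℕ) : IntPar (var i) (var i)
  | app {u u' v v' : Lam} : IntPar u u' → Par v v' → IntPar (app u v) (app u' v')
  | abs {u u' : Lam} : Par u u' → IntPar (abs u) (abs u')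

theorem Par.refl (u : Lam) : Par u u := by
  induction u with
  | var i => exact .var i
  | app _ _ hu hv => exact .app hu hv
  | abs _ hu => exact .abs hu

theorem Beta.par (h : Beta u v) : Par u v := by
  induction h with
  | beta u v => exact .beta (.refl u) (.refl v)
  | appL v _ ih => exact .app ih (.refl v)
  | appR u _ ih => exact .app (.refl u) ih
  | abs _ ih => exact .abs ih

theorem Par.rename (h : Par u v) (ρ : ℕ → ℕ) : Par (u.rename ρ) (v.rename ρ) := by
  induction h generalizing ρ with
  | var i => exact .var _
  | app _ _ hu hv => exact .app (hu ρ) (hv ρ)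
  | abs _ hu => simpa only [rename_abs] using .abs (hu _)
  | beta _ _ hu hv =>
    rw [subst0_rename, Lam.rename, rename_abs]
    exact .beta (hu _) (hv ρ)

theorem Par.liftSub (h : ∀ i, Par (σ i) (σ' i)) (i : ℕ) : Par (liftSub σ i) (liftSub σ' i) := by
  cases i with
  | zero => exact .var 0
  | succ i => exact (h i).rename _

theorem Par.subst (h : Par u v) (hσ : ∀ i, Par (σ i) (σ' i)) :
    Par (u.subst σ) (v.subst σ') := by
  induction h generalizing σ σ' with
  | var i => exact hσ i
  | app _ _ hu hv => exact .app (hu hσ) (hv hσ)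
  | abs _ hu => exact .abs (hu (Par.liftSub hσ))
  | beta _ _ hu hv =>
    rw [subst0_subst]
    exact .beta (hu (Par.liftSub hσ)) (hv hσ)

theorem Par.scons_var (h : Par v v') (i : ℕ) : Par (scons v Lam.var i) (scons v' Lam.var i) := by
  cases i with
  | zero => exact h
  | succ i => exact .var i

theorem Par.subst0 (hu : Par u u') (hv : Par v v') : Par (u.subst0 v) (u'.subst0 v') := by
  rw [subst0_eq_subst_scons, subst0_eq_subst_scons]
  exact hu.subst hv.scons_var

theorem WeakHead.subst (h : WeakHead u v) (σ : ℕ → Lam) :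
    WeakHead (u.subst σ) (v.subst σ) := by
  induction h with
  | beta u v =>
    rw [subst0_subst]
    exact .beta _ _
  | appL _ _ ih => exact .appL _ ih

theorem WeakHeads.subst (h : WeakHeads u v) (σ : ℕ → Lam) :
    WeakHeads (u.subst σ) (v.subst σ) :=
  h.lift _ fun _ _ h => h.subst σ

theorem WeakHeads.appL (h : WeakHeads u v) (w : Lam) : WeakHeads (app u w) (app v w) :=
  h.lift (app · w) fun _ _ h => h.appL w

theorem IntPar.subst (h : IntPar u v) (hσ : ∀ i, Par (σ i) (σ' i))
    (hfac : ∀ i, ∃ w, WeakHeads (σ i) w ∧ IntPar w (σ' i)) :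
    ∃ w, WeakHeads (u.subst σ) w ∧ IntPar w (v.subst σ') := by
  induction h with
  | var i => exact hfac i
  | app _ hv ih =>
    obtain ⟨w, hw, hint⟩ := ih
    exact ⟨_, hw.appL _, .app hint (hv.subst hσ)⟩
  | abs h => exact ⟨_, .refl, .abs (h.subst (Par.liftSub hσ))⟩

theorem Par.exists_weakHeads_intPar (h : Par u v) : ∃ w, WeakHeads u w ∧ IntPar w v := by
  induction h with
  | var i => exact ⟨_, .refl, .var i⟩
  | app _ hv ih _ =>
    obtain ⟨w, hw, hint⟩ := ih
    exact ⟨_, hw.appL _, .app hint hv⟩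
  | abs h _ => exact ⟨_, .refl, .abs h⟩
  | @beta u u' v v' _ hv ihu ihv =>
    obtain ⟨w, hw, hint⟩ := ihu
    have hfac : ∀ i, ∃ w, WeakHeads (scons v Lam.var i) w ∧ IntPar w (scons v' Lam.var i)
      | 0 => ihv
      | i + 1 => ⟨_, .refl, .var i⟩
    obtain ⟨w', hw', hint'⟩ := hint.subst hv.scons_var hfac
    rw [← subst0_eq_subst_scons] at hw' hint'
    have hbody : WeakHeads (u.subst0 v) (w.subst0 v) := hw.subst _
    exact ⟨w', .head (.beta u v) (hbody.trans hw'), hint'⟩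

theorem IntPar.exists_weakHead (hint : IntPar u v) (h : WeakHead v v') :
    ∃ u', WeakHead u u' ∧ Par u' v' := by
  induction h generalizing u with
  | beta =>
    obtain _ | @⟨_, _, _, _, hf, ha⟩ := hint
    obtain _ | _ | hb := hf
    exact ⟨_, .beta _ _, hb.subst0 ha⟩
  | appL _ _ ih =>
    obtain _ | @⟨_, _, _, _, hf, ha⟩ := hint
    obtain ⟨u', hu', hpar⟩ := ih hf
    exact ⟨_, .appL _ hu', .app hpar ha⟩

theorem Par.exists_weakHeads (hpar : Par u v) (h : WeakHead u u') :
    ∃ v', WeakHeads v v' ∧ Par u' v' := by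
  induction h generalizing v with
  | beta =>
    cases hpar with
    | app hf ha =>
      cases hf with
      | abs hb => exact ⟨_, .single (.beta _ _), hb.subst0 ha⟩
    | beta hb ha => exact ⟨_, .refl, hb.subst0 ha⟩
  | appL _ h ih =>
    cases hpar with
    | app hf ha =>
      obtain ⟨v', hv', hpar'⟩ := ih hf
      exact ⟨_, hv'.appL _, .app hpar' ha⟩
    | beta => cases h

theorem Par.weakHeads_var_iff (hpar : Par u v) (i : ℕ) :
    WeakHeads u (Lam.var i) ↔ WeakHeads v (Lam.var i) := by
  constructor
  · intro h
    induction h using Relation.ReflTransGen.head_induction_on generalizing v with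
    | refl =>
      cases hpar
      exact .refl
    | head hstep _ ih =>
      obtain ⟨v', hv', hpar'⟩ := hpar.exists_weakHeads hstep
      exact hv'.trans (ih hpar')
  · intro h
    induction h using Relation.ReflTransGen.head_induction_on generalizing u with
    | refl =>
      obtain ⟨w, hw, hint⟩ := hpar.exists_weakHeads_intPar
      cases hint
      exact hw
    | head hstep _ ih =>
      obtain ⟨w, hw, hint⟩ := hpar.exists_weakHeads_intPar
      obtain ⟨w', hw', hpar'⟩ := hint.exists_weakHead hstep
      exact (hw.tail hw').trans (ih hpar')

theorem BetaEq.weakHeads_var {i : ℕ} (h : BetaEq u (var i)) : WeakHeads u (var i) := by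
  suffices weakHeads_iff : ∀ {u v}, BetaEq u v → (WeakHeads u (var i) ↔ WeakHeads v (var i)) from
    (weakHeads_iff h).2 .refl
  intro u v h
  induction h with
  | rel _ _ h => exact h.par.weakHeads_var_iff i
  | refl => exact Iff.rfl
  | symm _ _ _ ih => exact ih.symm
  | trans _ _ _ _ _ ih ih' => exact ih.trans ih'

theorem WeakHead.headStep (h : WeakHead u v) : HeadStep u v := by
  induction h with
  | beta u v => exact .beta u v
  | appL v h ih =>
    refine .appL v ?_ ih
    cases h <;> exact id

theorem WeakHeads.headRed (h : WeakHeads u v) : HeadRed u v := by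
  induction h using Relation.ReflTransGen.head_induction_on with
  | refl => exact ⟨0, .refl v⟩
  | head hstep _ ih =>
    obtain ⟨n, hn⟩ := ih
    exact ⟨n + 1, .step hstep.headStep hn⟩

/-! ### β-equivalence -/

theorem BetaEq.refl (u : Lam) : BetaEq u u := Relation.EqvGen.refl u

theorem BetaEq.trans (h : BetaEq u v) (h' : BetaEq v w) : BetaEq u w :=
  Relation.EqvGen.trans _ _ _ h h'

instance : Trans BetaEq BetaEq BetaEq := ⟨BetaEq.trans⟩

theorem BetaEq.map (f : Lam → Lam) (hf : ∀ ⦃a b⦄, Beta a b → Beta (f a) (f b))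
    (h : BetaEq u v) : BetaEq (f u) (f v) :=
  Quot.eqvGen_exact (congrArg (Quot.map f hf) (Quot.eqvGen_sound h))

theorem BetaEq.appL (h : BetaEq u u') (v : Lam) : BetaEq (app u v) (app u' v) :=
  h.map (Lam.app · v) fun _ _ => .appL v

theorem BetaEq.appR (u : Lam) (h : BetaEq v v') : BetaEq (app u v) (app u v') :=
  h.map (Lam.app u) fun _ _ => .appR u

theorem BetaEq.appList (h : BetaEq u u') (vs : List Lam) :
    BetaEq (appList u vs) (appList u' vs) := by
  induction vs generalizing u u' with
  | nil => exact h
  | cons v _ ih => exact ih (h.appL v)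

theorem BetaEq.app_abs (u v : Lam) : BetaEq (app (abs u) v) (u.subst0 v) :=
  .rel _ _ (.beta u v)

theorem Beta.subst (h : Beta u v) (σ : ℕ → Lam) : Beta (u.subst σ) (v.subst σ) := by
  induction h generalizing σ with
  | beta u v =>
    rw [subst0_subst]
    exact .beta _ _
  | appL _ _ ih => exact .appL _ (ih σ)
  | appR _ _ ih => exact .appR _ (ih σ)
  | abs _ ih => exact .abs (ih _)

theorem BetaEq.rename (h : BetaEq u v) (ρ : ℕ → ℕ) : BetaEq (u.rename ρ) (v.rename ρ) := by
  rw [rename_eq_subst, rename_eq_subst]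
  exact h.map (Lam.subst _) fun _ _ h => h.subst _

/-! ### Combinators with several arguments -/

/-- The `n`-fold abstraction `λ x₁ … xₙ. u`. -/
def lams : ℕ → Lam → Lam
  | 0, u => u
  | n + 1, u => abs (lams n u)

/-- The environment for the body of an iterated abstraction that is applied to `vs` and whose
other free variables have the values `σ`: the last argument is the value of the variable `0`. -/
def pushArgs (σ : ℕ → Lam) (vs : List Lam) : ℕ → Lam := vs.foldl (fun σ v => scons v σ) σ

/-- The variables `x₁, …, xₙ` inside `λ x₁ … xₙ`, that is, the indices `n - 1, …, 0`. -/
def argVars : ℕ → List Lam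
  | 0 => []
  | n + 1 => var n :: argVars n

theorem length_argVars (n : ℕ) : (argVars n).length = n := by
  induction n with
  | zero => rfl
  | succ n ih => rw [argVars, List.length_cons, ih]

theorem exists_eq_var_of_mem_argVars (hv : v ∈ argVars n) : ∃ x < n, v = var x := by
  induction n with
  | zero => cases hv
  | succ n ih =>
    obtain rfl | hv := List.mem_cons.1 hv
    · exact ⟨n, Nat.lt_succ_self n, rfl⟩
    · obtain ⟨x, hx, rfl⟩ := ih hv
      exact ⟨x, hx.trans (Nat.lt_succ_self n), rfl⟩

theorem closedUnder_of_mem_argVars (hv : v ∈ argVars n) : ClosedUnder n v := by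
  obtain ⟨x, hx, rfl⟩ := exists_eq_var_of_mem_argVars hv
  exact hx

theorem closedUnder_lams : ClosedUnder k (lams n u) ↔ ClosedUnder (k + n) u := by
  induction n generalizing k with
  | zero => rfl
  | succ n ih => rw [lams, ClosedUnder, ih, Nat.add_right_comm, Nat.add_assoc]

theorem pushArgs_append (σ : ℕ → Lam) (vs ws : List Lam) :
    pushArgs σ (vs ++ ws) = pushArgs (pushArgs σ vs) ws :=
  List.foldl_append

theorem pushArgs_comp_add_length (σ : ℕ → Lam) (vs : List Lam) :
    pushArgs σ vs ∘ (· + vs.length) = σ := by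
  induction vs generalizing σ with
  | nil => rfl
  | cons v vs ih =>
    funext i
    have hi : i + (v :: vs).length = (i + 1) + vs.length := by
      rw [List.length_cons]
      lia
    exact (congrArg _ hi).trans (congrFun (ih (scons v σ)) (i + 1))

theorem argVars_map_subst_pushArgs (σ : ℕ → Lam) (vs : List Lam) :
    (argVars vs.length).map (subst (pushArgs σ vs)) = vs := by
  induction vs generalizing σ with
  | nil => rfl
  | cons v vs ih =>
    have hv : pushArgs (scons v σ) vs vs.length = v := by
      simpa [scons] using congrFun (pushArgs_comp_add_length (scons v σ) vs) 0
    exact congrArg₂ List.cons hv (ih (scons v σ))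

theorem getElem_argVars_subst_pushArgs (σ : ℕ → Lam) (vs : List Lam) {i : ℕ} (hi : i < vs.length) :
    ((argVars vs.length)[i]'(by rwa [length_argVars])).subst (pushArgs σ vs) = vs[i] := by
  rw [← List.getElem_of_eq (argVars_map_subst_pushArgs σ vs) (by simpa [length_argVars] using hi),
    List.getElem_map]

theorem BetaEq.appList_lams_subst (u : Lam) (σ : ℕ → Lam) (vs : List Lam) :
    BetaEq (Lam.appList ((lams vs.length u).subst σ) vs) (u.subst (pushArgs σ vs)) := by
  induction vs generalizing σ with
  | nil => exact .refl _
  | cons v vs ih =>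
    refine BetaEq.trans (BetaEq.appList ?_ vs) (ih (scons v σ))
    rw [← subst_liftSub_subst0]
    exact .app_abs _ _

theorem BetaEq.appList_lams (u : Lam) (vs : List Lam) :
    BetaEq (Lam.appList (lams vs.length u) vs) (u.subst (pushArgs var vs)) := by
  simpa only [subst_var] using BetaEq.appList_lams_subst u var vs

/-- The projection `λ x₁ … xₙ. xᵢ₊₁`; the junk value for `n ≤ i` is `λ x₁ … xₙ. λ x. x`. -/
def selector (n i : ℕ) : Lam := lams n ((argVars n).getD i (abs (var 0)))

theorem closed_selector (n i : ℕ) : Closed (selector n i) := by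
  refine closedUnder_lams.2 ?_
  rw [Nat.zero_add, List.getD_eq_getElem?_getD]
  by_cases hi : i < (argVars n).length
  · rw [List.getElem?_eq_getElem hi]
    exact closedUnder_of_mem_argVars (List.getElem_mem hi)
  · rw [List.getElem?_eq_none (not_lt.1 hi)]
    exact Nat.succ_pos n

theorem BetaEq.appList_selector (vs : List Lam) {i : ℕ} (hi : i < vs.length) :
    BetaEq (Lam.appList (selector vs.length i) vs) vs[i] := by
  have hi' : i < (argVars vs.length).length := (length_argVars _).symm ▸ hi
  rw [← getElem_argVars_subst_pushArgs var vs hi, selector, List.getD_eq_getElem _ _ hi']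
  exact .appList_lams _ vs

/-- The permutator `λ z₁ … zₚ w. w z₁ … zₚ`. -/
def permutator (p : ℕ) : Lam :=
  lams (p + 1) (appList (var 0) ((argVars p).map (rename (· + 1))))

theorem closed_permutator (p : ℕ) : Closed (permutator p) := by
  refine closedUnder_lams.2 (ClosedUnder.appList (Nat.succ_pos _) fun v hv => ?_)
  obtain ⟨x, hx, rfl⟩ := List.mem_map.1 hv
  exact (closedUnder_of_mem_argVars hx).rename fun i hi => by lia

theorem BetaEq.app_appList_permutator (vs : List Lam) (w : Lam) :
    BetaEq (app (Lam.appList (permutator vs.length) vs) w) (Lam.appList w vs) := by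
  have hargs : (((argVars vs.length).map (Lam.rename (· + 1))).map
      (subst (scons w (pushArgs var vs)))) = vs := by
    simpa only [List.map_map, Function.comp_def, shift_subst_scons]
      using argVars_map_subst_pushArgs var vs
  have h := BetaEq.appList_lams
    (Lam.appList (var 0) ((argVars vs.length).map (Lam.rename (· + 1)))) (vs ++ [w])
  rw [List.length_append, appList_append, pushArgs_append, appList_subst] at h
  change BetaEq _ (Lam.appList w (List.map (subst (scons w (pushArgs var vs))) _)) at h
  rwa [hargs] at h

theorem BetaEq.appList_permutator_append (vs ws : List Lam) {i : ℕ} (hi : i < ws.length) :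
    BetaEq (Lam.appList (permutator (vs.length + i)) (vs ++ ws))
      (Lam.appList ws[i] (vs ++ ws.eraseIdx i)) := by
  have hsplit : vs ++ ws = (vs ++ ws.take i) ++ ws[i] :: ws.drop (i + 1) := by simp
  have hlen : vs.length + i = (vs ++ ws.take i).length := by simp [hi.le]
  rw [List.eraseIdx_eq_take_drop_succ, ← List.append_assoc, appList_append _ _ (ws.drop _),
    hsplit, appList_append, hlen]
  exact (BetaEq.app_appList_permutator _ _).appList _

/-- `λ x₁ … xₘ y₁ … yᵣ. E x₁ … xₘ`, for a closed term `E`. -/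
def keepFirst (m r : ℕ) (E : Lam) : Lam := lams (m + r) ((appList E (argVars m)).rename (· + r))

theorem Closed.keepFirst {E : Lam} (hE : Closed E) (m r : ℕ) : Closed (keepFirst m r E) := by
  refine closedUnder_lams.2 (ClosedUnder.rename (k := m) ?_ fun i hi => by lia)
  exact ClosedUnder.appList (hE.closedUnder m) fun v => closedUnder_of_mem_argVars

theorem BetaEq.appList_keepFirst {E : Lam} (hE : Closed E) (vs ws : List Lam) :
    BetaEq (Lam.appList (keepFirst vs.length ws.length E) (vs ++ ws)) (Lam.appList E vs) := by
  have h := BetaEq.appList_lams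
    ((Lam.appList E (argVars vs.length)).rename (· + ws.length)) (vs ++ ws)
  rwa [List.length_append, rename_subst, pushArgs_append, pushArgs_comp_add_length, appList_subst,
    hE.subst, argVars_map_subst_pushArgs] at h

/-- `λ x. x a₁ … aₙ`, for closed terms `a₁, …, aₙ`. -/
def feed (as : List Lam) : Lam := abs (appList (var 0) as)

theorem closed_feed {as : List Lam} (has : ∀ a ∈ as, Closed a) : Closed (feed as) :=
  ClosedUnder.appList (k := 1) Nat.one_pos fun a ha => (has a ha).closedUnder 1

theorem BetaEq.app_feed {as : List Lam} (has : ∀ a ∈ as, Closed a) (u : Lam) :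
    BetaEq (app (feed as) u) (Lam.appList u as) := by
  have h := BetaEq.app_abs (Lam.appList (var 0) as) u
  rwa [subst0_eq_subst_scons, appList_subst,
    List.map_congr_left (g := id) fun a ha => (has a ha).subst _, List.map_id] at h

/-! ### βη-classes -/

/-- The quotient of the terms by βη-equivalence. -/
def BetaEtaClass : Type := Quot fun u v : Lam => Beta u v ∨ Eta u v

/-- The βη-class of a term. -/
def betaEtaClass (t : Lam) : BetaEtaClass := Quot.mk _ t

/-- Application of βη-classes. -/
def BetaEtaClass.app : BetaEtaClass → BetaEtaClass → BetaEtaClass :=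
  Quot.map₂ Lam.app (fun u _ _ h => h.imp (.appR u) (.appR u))
    fun _ _ v h => h.imp (.appL v) (.appL v)

/-- Abstraction of βη-classes. -/
def BetaEtaClass.abs : BetaEtaClass → BetaEtaClass :=
  Quot.map Lam.abs fun _ _ h => h.imp .abs .abs

theorem betaEtaEq_of_betaEtaClass_eq (h : betaEtaClass u = betaEtaClass v) : BetaEtaEq u v :=
  Quot.eqvGen_exact h

theorem betaEtaClass_appList (u : Lam) (ss : List Lam) :
    betaEtaClass (appList u ss) =
      (ss.map betaEtaClass).foldl BetaEtaClass.app (betaEtaClass u) := by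
  induction ss generalizing u with
  | nil => rfl
  | cons s _ ih => exact ih (app u s)

/-! ### Normal terms of bounded size -/

/-- The number of variable occurrences and abstractions of a term. -/
def size : Lam → ℕ
  | var _ => 1
  | app u v => u.size + v.size
  | abs u => u.size + 1

theorem size_pos (t : Lam) : 0 < t.size := by
  induction t with
  | var => exact Nat.one_pos
  | app _ _ hu _ => exact Nat.add_pos_left hu _
  | abs => exact Nat.succ_pos _

theorem size_rename (t : Lam) (ρ : ℕ → ℕ) : (t.rename ρ).size = t.size := by
  induction t generalizing ρ with
  | var => rfl
  | app _ _ hu hv => rw [rename, size, size, hu, hv]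
  | abs _ hu => rw [rename_abs, size, size, hu]

theorem isAbs_rename : (t.rename ρ).IsAbs ↔ t.IsAbs := by
  cases t <;> rfl

theorem normal_var (i : ℕ) : Normal (var i) := nofun

theorem normal_abs : Normal (abs u) ↔ Normal u :=
  ⟨fun h _ hb => h _ hb.abs, fun h _ hb => by cases hb with | abs hb => exact h _ hb⟩

theorem normal_app : Normal (app u v) ↔ Normal u ∧ Normal v ∧ ¬ u.IsAbs := by
  refine ⟨fun h => ⟨fun _ hb => h _ (.appL v hb), fun _ hb => h _ (.appR u hb), fun habs => ?_⟩, ?_⟩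
  · cases u with
    | abs b => exact h _ (.beta b v)
    | _ => exact habs
  · rintro ⟨hu, hv, habs⟩ _ hb
    cases hb with
    | beta => exact habs trivial
    | appL _ hb => exact hu _ hb
    | appR _ hb => exact hv _ hb

theorem Normal.rename (h : Normal t) (ρ : ℕ → ℕ) : Normal (t.rename ρ) := by
  induction t generalizing ρ with
  | var i => exact normal_var _
  | app u v hu hv =>
    rw [normal_app] at h
    exact normal_app.2 ⟨hu h.1 ρ, hv h.2.1 ρ, isAbs_rename.not.2 h.2.2⟩
  | abs u hu =>
    rw [rename_abs]
    exact normal_abs.2 (hu (normal_abs.1 h) _)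

/-- The normal terms of size at most `k` with free variables below `ℓ`. -/
def boundedNormal (k ℓ : ℕ) : Set Lam := {t | Normal t ∧ t.size ≤ k ∧ ClosedUnder ℓ t}

/-- The terms `x s₁ … sₘ` with `x < ℓ`, `m ≤ L` and all `sᵢ` in `A`. -/
def neutrals (ℓ L : ℕ) (A : Set Lam) : Set Lam :=
  {t | ∃ x < ℓ, ∃ ss : List Lam, ss.length ≤ L ∧ (∀ s ∈ ss, s ∈ A) ∧ t = appList (var x) ss}

variable {A B : Set Lam} {L : ℕ}

theorem boundedNormal_mono (hkm : k ≤ m) (ℓ : ℕ) : boundedNormal k ℓ ⊆ boundedNormal m ℓ :=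
  fun _ ht => ⟨ht.1, ht.2.1.trans hkm, ht.2.2⟩

theorem shift_mem_boundedNormal (ht : t ∈ boundedNormal k ℓ) :
    t.rename (· + 1) ∈ boundedNormal k (ℓ + 1) :=
  ⟨ht.1.rename _, (size_rename t _).trans_le ht.2.1, ht.2.2.rename fun _ => Nat.succ_lt_succ⟩

theorem neutrals_mono (hmL : m ≤ L) (hAB : A ⊆ B) : neutrals ℓ m A ⊆ neutrals ℓ L B := by
  rintro _ ⟨x, hx, ss, hlen, hss, rfl⟩
  exact ⟨x, hx, ss, hlen.trans hmL, fun s hs => hAB (hss s hs), rfl⟩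

theorem app_mem_neutrals (ht : t ∈ neutrals ℓ m A) (hu : u ∈ A) :
    app t u ∈ neutrals ℓ (m + 1) A := by
  obtain ⟨x, hx, ss, hlen, hss, rfl⟩ := ht
  refine ⟨x, hx, ss ++ [u], ?_, ?_, (appList_append _ ss [u]).symm⟩
  · simpa using hlen
  · simpa [or_imp, forall_and] using ⟨hss, hu⟩

theorem shift_mem_neutrals (ht : t ∈ neutrals ℓ m (boundedNormal k ℓ)) :
    t.rename (· + 1) ∈ neutrals (ℓ + 1) m (boundedNormal k (ℓ + 1)) := by
  obtain ⟨x, hx, ss, hlen, hss, rfl⟩ := ht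
  refine ⟨x + 1, Nat.succ_lt_succ hx, ss.map (rename (· + 1)), ?_, ?_, appList_rename _ ss _⟩
  · rwa [List.length_map]
  · exact List.forall_mem_map.2 fun s hs => shift_mem_boundedNormal (hss s hs)

theorem not_isAbs_of_mem_neutrals (ht : t ∈ neutrals ℓ m A) : ¬ t.IsAbs := by
  obtain ⟨x, -, ss, -, -, rfl⟩ := ht
  induction ss using List.reverseRecOn with
  | nil => exact id
  | append_singleton ss s _ =>
    rw [appList_append]
    exact id

theorem mem_neutrals_of_mem_boundedNormal (ht : t ∈ boundedNormal (k + 1) ℓ) (habs : ¬ t.IsAbs) :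
    t ∈ neutrals ℓ k (boundedNormal k ℓ) := by
  induction t generalizing k with
  | var x => exact ⟨x, ht.2.2, [], Nat.zero_le k, nofun, rfl⟩
  | app u v hu _ =>
    obtain ⟨hnormal, hsize, hclosed⟩ := ht
    rw [normal_app] at hnormal
    rw [size] at hsize
    have hu_pos := u.size_pos
    have hv_pos := v.size_pos
    obtain ⟨k, rfl⟩ : ∃ j, k = j + 1 := ⟨k - 1, by lia⟩
    have hneutral := hu (k := k) ⟨hnormal.1, by lia, hclosed.1⟩ hnormal.2.2
    exact app_mem_neutrals (neutrals_mono le_rfl (boundedNormal_mono k.le_succ ℓ) hneutral)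
      ⟨hnormal.2.1, by lia, hclosed.2⟩
  | abs => exact absurd trivial habs

/-- The body of `t`, taken after an η-expansion if `t` is not an abstraction. -/
def peel : Lam → Lam
  | abs u => u
  | t => app (t.rename (· + 1)) (var 0)

theorem peel_of_not_isAbs (habs : ¬ t.IsAbs) : peel t = app (t.rename (· + 1)) (var 0) := by
  cases t with
  | abs => exact absurd trivial habs
  | _ => rfl

theorem abs_betaEtaClass_peel (t : Lam) : (betaEtaClass (peel t)).abs = betaEtaClass t := by
  by_cases habs : t.IsAbs
  · cases t with
    | abs => rfl
    | _ => exact habs.elim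
  · rw [peel_of_not_isAbs habs]
    exact Quot.sound (.inr (.eta t))

theorem BetaEq.app_subst_peel (t v : Lam) (σ : ℕ → Lam) :
    BetaEq (app (t.subst σ) v) ((peel t).subst (scons v σ)) := by
  by_cases habs : t.IsAbs
  · cases t with
    | abs u =>
      rw [peel, ← subst_liftSub_subst0]
      exact .app_abs _ v
    | _ => exact habs.elim
  · rw [peel_of_not_isAbs habs, subst, shift_subst_scons]
    exact .refl _

theorem iterate_peel_mem_neutrals (hnk : n ≤ k) (ht : t ∈ neutrals ℓ m (boundedNormal k ℓ)) :
    peel^[n] t ∈ neutrals (ℓ + n) (m + n) (boundedNormal k (ℓ + n)) := by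
  induction n with
  | zero => exact ht
  | succ n ih =>
    have hn := ih (by lia)
    rw [Function.iterate_succ_apply', peel_of_not_isAbs (not_isAbs_of_mem_neutrals hn)]
    exact app_mem_neutrals (shift_mem_neutrals hn)
      ⟨normal_var 0, Nat.one_le_of_lt hnk, Nat.succ_pos _⟩

theorem iterate_peel_mem_neutrals_of_mem_boundedNormal (hnk : n ≤ k)
    (ht : t ∈ boundedNormal (n + 1) ℓ) :
    peel^[n] t ∈ neutrals (ℓ + n) (k + n) (boundedNormal k (ℓ + n)) := by
  induction t generalizing n ℓ with
  | abs u ih =>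
    obtain ⟨hnormal, hsize, hclosed⟩ := ht
    have hu_pos := u.size_pos
    rw [size] at hsize
    obtain ⟨n, rfl⟩ : ∃ j, n = j + 1 := ⟨n - 1, by lia⟩
    have hu := ih (by lia) (ℓ := ℓ + 1) (n := n) ⟨normal_abs.1 hnormal, by lia, hclosed⟩
    rw [Nat.add_right_comm ℓ 1 n] at hu
    exact neutrals_mono (by lia) subset_rfl hu
  | _ =>
    exact iterate_peel_mem_neutrals hnk (neutrals_mono hnk (boundedNormal_mono hnk ℓ)
      (mem_neutrals_of_mem_boundedNormal ht id))

/-! ### Decoding -/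

/-- The terms of `A` can be decoded under `σ`: every assignment of closed terms to the βη-classes is
computed, on the `σ`-instances of the terms of `A`, by a closed term. -/
def Decodable (σ : ℕ → Lam) (A : Set Lam) : Prop :=
  ∀ g : BetaEtaClass → Lam, (∀ c, Closed (g c)) →
    ∃ D, Closed D ∧ ∀ t ∈ A, BetaEq (app D (t.subst σ)) (g (betaEtaClass t))

theorem Decodable.mono (hB : Decodable σ B) (hAB : A ⊆ B) : Decodable σ A := fun g hg =>
  let ⟨D, hD, hdecode⟩ := hB g hg
  ⟨D, hD, fun t ht => hdecode t (hAB ht)⟩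

theorem Decodable.exists_appList (hA : Decodable σ A) (m : ℕ) (g : List BetaEtaClass → Lam)
    (hg : ∀ cs, Closed (g cs)) :
    ∃ E, Closed E ∧ ∀ ss : List Lam, ss.length = m → (∀ s ∈ ss, s ∈ A) →
      BetaEq (appList E (ss.map (subst σ))) (g (ss.map betaEtaClass)) := by
  induction m generalizing g with
  | zero =>
    refine ⟨g [], hg [], fun ss hlen _ => ?_⟩
    rw [List.eq_nil_of_length_eq_zero hlen]
    exact .refl _
  | succ m ih =>
    choose E hE hdecode using fun c => ih (fun cs => g (c :: cs)) fun cs => hg (c :: cs)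
    obtain ⟨D, hD, hhead⟩ := hA E hE
    refine ⟨D, hD, fun ss hlen hss => ?_⟩
    obtain ⟨s, ss, rfl⟩ := List.exists_cons_of_length_eq_add_one hlen
    rw [List.forall_mem_cons] at hss
    exact ((hhead s hss.1).appList _).trans
      (hdecode _ ss (Nat.succ_injective hlen) hss.2)

theorem Decodable.preimage_peel (hv : Closed v) (hA : Decodable (scons v σ) A) :
    Decodable σ (peel ⁻¹' A) := by
  intro g hg
  obtain ⟨D, hD, hdecode⟩ := hA (g ∘ BetaEtaClass.abs) fun c => hg c.abs
  have hbeta (u : Lam) : BetaEq (app (abs (app D (app (var 0) v))) u) (app D (app u v)) := by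
    have h := BetaEq.app_abs (app D (app (var 0) v)) u
    rwa [subst0_eq_subst_scons, subst, subst, hD.subst, hv.subst] at h
  refine ⟨abs (app D (app (var 0) v)), ⟨hD.closedUnder 1, Nat.one_pos, hv.closedUnder 1⟩,
    fun t ht => ?_⟩
  calc
    BetaEq _ (app D (app (t.subst σ) v)) := hbeta _
    BetaEq _ (app D ((peel t).subst (scons v σ))) := .appR D (.app_subst_peel t v σ)
    BetaEq _ (g (betaEtaClass (peel t)).abs) := hdecode (peel t) ht
    _ = g (betaEtaClass t) := by rw [abs_betaEtaClass_peel]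

theorem injOn_arity_sub {p : ℕ → ℕ} (hgap : ∀ x y, x < y → y < ℓ → p y + L < p x) :
    Set.InjOn (fun q : ℕ × ℕ => p q.1 - q.2) {q | q.1 < ℓ ∧ q.2 ≤ L ∧ q.2 ≤ p q.1} := by
  rintro ⟨x, i⟩ ⟨hx, hiL, hix⟩ ⟨y, j⟩ ⟨hy, hjL, hjy⟩ heq
  dsimp only at *
  obtain hlt | rfl | hlt := lt_trichotomy x y
  · have := hgap x y hlt hy
    lia
  · exact Prod.ext rfl (by lia)
  · have := hgap y x hlt hx
    lia

theorem exists_dispatch {p : ℕ → ℕ} (hp : ∀ x < ℓ, L ≤ p x)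
    (hgap : ∀ x y, x < y → y < ℓ → p y + L < p x) (E : ℕ → ℕ → Lam)
    (hE : ∀ x m, Closed (E x m)) :
    ∃ D, Closed D ∧ ∀ x < ℓ, ∀ vs : List Lam, vs.length ≤ L →
      BetaEq (app D (appList (permutator (p x)) vs)) (appList (E x vs.length) vs) := by
  let S : Set (ℕ × ℕ) := {q | q.1 < ℓ ∧ q.2 ≤ L ∧ q.2 ≤ p q.1}
  let decode : ℕ → ℕ × ℕ := Function.invFunOn (fun q : ℕ × ℕ => p q.1 - q.2) S
  let table : List Lam := (List.range (p 0 + 1)).map fun j =>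
    keepFirst (decode j).2 (p 0) (E (decode j).1 (decode j).2)
  have htable : ∀ a ∈ table, Closed a := List.forall_mem_map.2 fun j _ => (hE _ _).keepFirst _ _
  refine ⟨feed table, closed_feed htable, fun x hx vs hvs => ?_⟩
  have hpx := hp x hx
  have hle : p x ≤ p 0 := by
    obtain rfl | hpos := Nat.eq_zero_or_pos x
    · rfl
    · have := hgap 0 x hpos hx
      lia
  have hlength : table.length = p 0 + 1 := by simp [table]
  have hi : p x - vs.length < table.length := by lia
  have hdecode : decode (p x - vs.length) = (x, vs.length) :=
    (injOn_arity_sub hgap).leftInvOn_invFunOn (show (x, vs.length) ∈ S from ⟨hx, hvs, by lia⟩)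
  have hentry : table[p x - vs.length] = keepFirst vs.length (p 0) (E x vs.length) := by
    simp [table, hdecode]
  have hrest : (table.eraseIdx (p x - vs.length)).length = p 0 := by
    rw [List.length_eraseIdx_of_lt hi, hlength, Nat.add_sub_cancel]
  calc
    BetaEq _ (appList (permutator (p x)) (vs ++ table)) := by
      rw [appList_append]
      exact .app_feed htable _
    BetaEq _ (appList table[p x - vs.length] (vs ++ table.eraseIdx (p x - vs.length))) := by
      have h := BetaEq.appList_permutator_append vs table hi
      rwa [Nat.add_sub_cancel' (by lia)] at h
    BetaEq _ (appList (E x vs.length) vs) := by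
      rw [hentry, ← hrest]
      exact .appList_keepFirst (hE _ _) _ _

theorem Decodable.neutrals {p : ℕ → ℕ} (hA : Decodable σ A) (hσ : ∀ x < ℓ, σ x = permutator (p x))
    (hp : ∀ x < ℓ, L ≤ p x) (hgap : ∀ x y, x < y → y < ℓ → p y + L < p x) :
    Decodable σ (neutrals ℓ L A) := by
  intro g hg
  choose E hE hargs using fun x m => hA.exists_appList m
    (fun cs => g (cs.foldl BetaEtaClass.app (betaEtaClass (var x)))) fun _ => hg _
  obtain ⟨D, hD, hdispatch⟩ := exists_dispatch hp hgap E hE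
  refine ⟨D, hD, ?_⟩
  rintro _ ⟨x, hx, ss, hlen, hss, rfl⟩
  have hhead := hdispatch x hx (ss.map (subst σ)) (by rwa [List.length_map])
  rw [List.length_map] at hhead
  rw [betaEtaClass_appList, appList_subst, subst, hσ x hx]
  exact hhead.trans (hargs x _ ss rfl hss)

/-- An environment that sends the variables below `ℓ` to permutators whose arities are positive
multiples of `L + 1` and decrease with the variable. -/
def permEnv (L : ℕ) : ℕ → ℕ → Lam
  | 0 => var
  | ℓ + 1 => scons (permutator ((ℓ + 1) * (L + 1))) (permEnv L ℓ)

theorem permEnv_of_lt {x : ℕ} (hx : x < ℓ) : permEnv L ℓ x = permutator ((ℓ - x) * (L + 1)) := by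
  induction ℓ generalizing x with
  | zero => exact absurd hx x.not_lt_zero
  | succ ℓ ih =>
    cases x with
    | zero => rfl
    | succ x =>
      rw [Nat.add_sub_add_right]
      exact ih (Nat.lt_of_succ_lt_succ hx)

theorem Decodable.neutrals_permEnv (hA : Decodable (permEnv L ℓ) A) (hmL : m ≤ L) :
    Decodable (permEnv L ℓ) (Lam.neutrals ℓ m A) := by
  refine Decodable.mono (hA.neutrals (fun _ => permEnv_of_lt) (L := L) ?_ ?_)
    (neutrals_mono hmL subset_rfl)
  · intro x hx
    exact L.le_succ.trans (Nat.le_mul_of_pos_left _ (Nat.sub_pos_of_lt hx))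
  · intro x y hxy hy
    have : (ℓ - y + 1) * (L + 1) ≤ (ℓ - x) * (L + 1) := Nat.mul_le_mul_right _ (by lia)
    rw [Nat.add_mul] at this
    lia

theorem Decodable.preimage_iterate_peel (hA : Decodable (permEnv L (ℓ + n)) A) :
    Decodable (permEnv L ℓ) (peel^[n] ⁻¹' A) := by
  induction n generalizing A with
  | zero => exact hA
  | succ n ih =>
    rw [Function.iterate_succ', Set.preimage_comp]
    exact ih (Decodable.preimage_peel (closed_permutator _) hA)

theorem decodable_boundedNormal (hkL : 2 * k ≤ L) (ℓ : ℕ) :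
    Decodable (permEnv L ℓ) (boundedNormal k ℓ) := by
  induction k generalizing ℓ with
  | zero =>
    intro g hg
    exact ⟨g (betaEtaClass (var 0)), hg _, fun t ht => absurd ht.2.1 t.size_pos.not_ge⟩
  | succ k ih =>
    have hneutrals := (ih (by lia) (ℓ + k)).neutrals_permEnv (m := k + k) (by lia)
    exact hneutrals.preimage_iterate_peel.mono fun t ht =>
      iterate_peel_mem_neutrals_of_mem_boundedNormal le_rfl ht

/-! ### Separation and storage -/

theorem exists_separator {F : Finset Lam} (hF : ∀ t ∈ F, Closed t ∧ Normal t)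
    (hdist : ∀ t ∈ F, ∀ t' ∈ F, t ≠ t' → ¬ BetaEtaEq t t') (g : Lam → Lam)
    (hg : ∀ t, Closed (g t)) : ∃ D, Closed D ∧ ∀ t ∈ F, BetaEq (app D t) (g t) := by
  have : Nonempty Lam := ⟨var 0⟩
  have hinj : Set.InjOn betaEtaClass F := fun t ht t' ht' heq =>
    by_contra fun hne => hdist t ht t' ht' hne (betaEtaEq_of_betaEtaClass_eq heq)
  obtain ⟨D, hD, hdecode⟩ := decodable_boundedNormal (k := F.sup size) le_rfl 0
    (g ∘ Function.invFunOn betaEtaClass F) fun _ => hg _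
  refine ⟨D, hD, fun t ht => ?_⟩
  have h := hdecode t ⟨(hF t ht).2, Finset.le_sup ht, (hF t ht).1⟩
  rwa [(hF t ht).1.subst, Function.comp_apply, hinj.leftInvOn_invFunOn ht] at h

theorem WeakHeads.appList_of_betaEq_selector (ws : List Lam) {i : ℕ} (hi : i < ws.length)
    (h : BetaEq u (selector ws.length i)) : WeakHeads (appList u ws) ws[i] := by
  have hi' : i < (argVars ws.length).length := (length_argVars _).symm ▸ hi
  have hselect : BetaEq (appList (u.rename (· + ws.length)) (argVars ws.length))
      (argVars ws.length)[i] := by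
    have h' := BetaEq.appList_selector (argVars ws.length) hi'
    have hu := h.rename (· + ws.length)
    rw [(closed_selector _ _).rename] at hu
    rw [length_argVars] at h'
    exact (hu.appList _).trans h'
  obtain ⟨x, -, hx⟩ := exists_eq_var_of_mem_argVars (List.getElem_mem hi')
  rw [hx] at hselect
  have hred := hselect.weakHeads_var.subst (pushArgs var ws)
  rwa [← hx, getElem_argVars_subst_pushArgs _ _ hi, appList_subst, rename_subst,
    pushArgs_comp_add_length, subst_var, argVars_map_subst_pushArgs] at hred

/-- `λ θ f. D θ (f t₁) … (f tₙ)`, for closed terms `D, t₁, …, tₙ`. -/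
def storageOp (D : Lam) (ts : List Lam) : Lam :=
  abs (abs (appList (app D (var 1)) (ts.map (app (var 0)))))

theorem closed_storageOp {D : Lam} {ts : List Lam} (hD : Closed D) (hts : ∀ t ∈ ts, Closed t) :
    Closed (storageOp D ts) :=
  ClosedUnder.appList (k := 2) ⟨hD.closedUnder 2, Nat.one_lt_two⟩ <|
    List.forall_mem_map.2 fun t ht => ⟨Nat.two_pos, (hts t ht).closedUnder 2⟩

theorem weakHeads_storageOp {D : Lam} {ts : List Lam} (hD : Closed D) (hts : ∀ t ∈ ts, Closed t)
    (θ f : Lam) :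
    WeakHeads (app (app (storageOp D ts) θ) f) (appList (app D θ) (ts.map (app f))) := by
  have hargs : (ts.map (app (var 0))).map (subst (scons f (scons θ var))) = ts.map (app f) := by
    rw [List.map_map]
    exact List.map_congr_left fun t ht => congrArg (app f) ((hts t ht).subst _)
  have hbody : ((appList (app D (var 1)) (ts.map (app (var 0)))).subst
      (liftSub (scons θ var))).subst0 f = appList (app D θ) (ts.map (app f)) := by
    rw [subst_liftSub_subst0, appList_subst, hargs, subst, hD.subst]
    rfl
  have hθ := WeakHead.beta (abs (appList (app D (var 1)) (ts.map (app (var 0))))) θ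
  rw [subst0_eq_subst_scons] at hθ
  exact .head (hθ.appL f) (.single (hbody ▸ .beta _ f))

theorem isStorageFor_storageOp {D : Lam} {ts : List Lam} (hD : Closed D)
    (hts : ∀ t ∈ ts, Closed t) {i : ℕ} (hi : i < ts.length)
    (hselect : BetaEq (app D ts[i]) (selector ts.length i)) :
    IsStorageFor (storageOp D ts) ts[i] := by
  refine ⟨closed_storageOp hD hts, ts[i], .refl _, fun θ hθ => ⟨var, rfl, ?_⟩⟩
  have hselect' : BetaEq (app D θ) (selector (ts.map (app (var 0))).length i) := by
    rw [List.length_map]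
    exact (hθ.appR D).trans hselect
  have hstore := WeakHeads.appList_of_betaEq_selector (ts.map (app (var 0)))
    (by rwa [List.length_map]) hselect'
  rw [List.getElem_map] at hstore
  rw [subst_var]
  exact WeakHeads.headRed ((weakHeads_storageOp hD hts θ (var 0)).trans hstore)

end Lam

open Lam in
/-- Each finite set of closed normal λ-terms having all distinct βη-normal forms
has a storage operator. -/
theorem stmt9 (F : Finset Lam) (hF : ∀ t ∈ F, Closed t ∧ Normal t)
    (hdist : ∀ t ∈ F, ∀ t' ∈ F, t ≠ t' → ¬ BetaEtaEq t t') :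
    ∃ T : Lam, ∀ t ∈ F, IsStorageFor T t := by
  obtain ⟨D, hD, hselect⟩ := exists_separator hF hdist
    (fun t => selector F.toList.length (F.toList.idxOf t)) fun _ => closed_selector _ _
  refine ⟨storageOp D F.toList, fun t ht => ?_⟩
  have hi : F.toList.idxOf t < F.toList.length := List.idxOf_lt_length_of_mem (F.mem_toList.2 ht)
  have hget : F.toList[F.toList.idxOf t] = t := List.getElem_idxOf hi
  have hstorage : IsStorageFor (storageOp D F.toList) F.toList[F.toList.idxOf t] :=
    isStorageFor_storageOp hD (fun s hs => (hF s (F.mem_toList.1 hs)).1) hi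
      (hget.symm ▸ hselect t ht)
  rwa [hget] at hstorage
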